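/- Let $n \ge 1$ and $0 \le k \le n-1$. The number of labeled non-crossing forests on $n$ vertices placed on a circle, with exactly $k$ edges (hence $n-k$ tree components), where the components are labeled by disjoint sets $C_0,\ldots,C_{n-k-1}$ partitioning $\{0,1,\ldots,k-1\}$ with $|C_i| = |T_i| - 1$ for each component $T_i$, equals $\binom{n}{k+1} n^{k-1}$. -/

import Mathlib

/-- A non-crossing forest on `n` vertices placed on a circle (vertices `0,…,n-1` in cyclic
order, edges drawn as chords; chords `{a,c}` and `{b,d}` with `a < b < c < d` cross), with
exactly `k` edges, whose `n - k` tree components are labeled by pairwise disjoint sets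
covering `{0,…,k-1}`, the label of a component with `|T|` vertices having `|T| - 1`
elements. Crossing chords are required to lie in the same component. -/
structure LabeledNCForest (n k : ℕ) where
  G : SimpleGraph (Fin n)
  acyclic : G.IsAcyclic
  edges : G.edgeSet.ncard = k
  noncross : ∀ a b c d : Fin n, a < b → b < c → c < d →
    G.Adj a c → G.Adj b d → G.Reachable a b
  label : G.ConnectedComponent → Finset (Fin k)
  label_card : ∀ C, (label C).card + 1 =
    Nat.card {v : Fin n // G.connectedComponentMk v = C}
  label_partition : ∀ x : Fin k, ∃! C, x ∈ label C

open Finset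

/-!
Index the `n - k` components by a type `ι`. Since edges of one tree may cross each other, a
labeled forest with indexed components amounts to a map `g` from the labels to `ι`, a map `f` from
the vertices to `ι` whose fibres are pairwise noncrossing and exceed those of `g` by one element,
and an arbitrary tree on each fibre of `f`. Two facts make the count factor.

* The number of noncrossing maps `f` depends on the sizes of the fibres only through their number
  and sum (Kreweras). Reading the values of `f` in order and keeping on a stack the values that
  are still due, the next value is either the top of the stack or a new one.
* The number of choices of trees depends only on the sizes of the fibres, which are those of
  `Sum.elim id g : ι ⊕ Fin k → ι`. Summing it over `g` counts the forests on `ι ⊕ Fin k` with one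
  vertex of `ι` in each tree. There are `(n - k) * n ^ (k - 1)` of them (Cayley), as one sees by
  counting in two ways the edges that lead from a root to another tree (Pitman).

Dividing by the `(n - k)!` indexings of the components gives the formula.
-/

section RootedForests

variable {V : Type*} {G H : SimpleGraph V} {x y : V}

lemma reachable_sup_edge_iff (hne : x ≠ y) {a b : V} :
    (H ⊔ .edge x y).Reachable a b ↔ H.Reachable a b ∨ (H.Reachable a x ∧ H.Reachable y b) ∨
      (H.Reachable a y ∧ H.Reachable x b) := by
  constructor
  · rintro ⟨p⟩
    induction p with
    | nil => exact .inl .rfl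
    | @cons a c b h p ih =>
      rw [SimpleGraph.sup_adj, SimpleGraph.edge_adj] at h
      rcases h with h | ⟨⟨rfl, rfl⟩ | ⟨rfl, rfl⟩, -⟩
      · exact ih.imp h.reachable.trans
          (.imp (.imp_left h.reachable.trans) (.imp_left h.reachable.trans))
      · grind [SimpleGraph.Reachable.rfl]
      · grind [SimpleGraph.Reachable.rfl]
  · have hxy : (H ⊔ .edge x y).Reachable x y :=
      SimpleGraph.Adj.reachable (.inr ((SimpleGraph.adj_edge x y).2 ⟨rfl, hne⟩))
    have hmono {c d} (h : H.Reachable c d) : (H ⊔ .edge x y).Reachable c d := h.mono le_sup_left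
    rintro (h | ⟨hax, hyb⟩ | ⟨hay, hxb⟩)
    · exact hmono h
    · exact (hmono hax).trans (hxy.trans (hmono hyb))
    · exact (hmono hay).trans (hxy.symm.trans (hmono hxb))

lemma deleteEdges_sup_edge (h : G.Adj x y) : G.deleteEdges {s(x, y)} ⊔ .edge x y = G := by
  rw [SimpleGraph.deleteEdges, SimpleGraph.edge, sdiff_sup_cancel]
  simp [h]

lemma sup_edge_deleteEdges (h : ¬ H.Adj x y) : (H ⊔ .edge x y).deleteEdges {s(x, y)} = H := by
  rw [SimpleGraph.deleteEdges, SimpleGraph.edge, sup_sdiff_right_self, sdiff_eq_left]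
  simpa [SimpleGraph.disjoint_fromEdgeSet] using h

lemma not_reachable_deleteEdges (hG : G.IsAcyclic) (h : G.Adj x y) :
    ¬ (G.deleteEdges {s(x, y)}).Reachable x y :=
  SimpleGraph.isBridge_iff.1 (SimpleGraph.isAcyclic_iff_forall_adj_isBridge.1 hG h)

/-- `R` contains exactly one vertex, the root, of each connected component of `G`. -/
structure IsRootSet (G : SimpleGraph V) (R : Finset V) : Prop where
  eq_of_reachable : ∀ r ∈ R, ∀ s ∈ R, G.Reachable r s → r = s
  exists_reachable : ∀ v, ∃ r ∈ R, G.Reachable v r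

variable {R : Finset V}

lemma isRootSet_iff : IsRootSet G R ↔
    (∀ r ∈ R, ∀ s ∈ R, G.Reachable r s → r = s) ∧ ∀ v, ∃ r ∈ R, G.Reachable v r :=
  ⟨fun h => ⟨h.1, h.2⟩, fun h => ⟨h.1, h.2⟩⟩

lemma IsRootSet.sup_edge [DecidableEq V] (hR : IsRootSet H (insert x R)) (hx : x ∉ R)
    (hxy : ¬ H.Reachable x y) : IsRootSet (H ⊔ .edge x y) R := by
  have hne : x ≠ y := fun h => hxy (h ▸ .rfl)
  have hx_root {r} (hr : r ∈ R) : ¬ H.Reachable x r := fun hxr =>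
    hx (hR.eq_of_reachable x (mem_insert_self x R) r (mem_insert_of_mem hr) hxr ▸ hr)
  constructor
  · intro r hr s hs hrs
    rcases (reachable_sup_edge_iff hne).1 hrs with hrs | ⟨hrx, -⟩ | ⟨-, hxs⟩
    · exact hR.eq_of_reachable r (mem_insert_of_mem hr) s (mem_insert_of_mem hs) hrs
    · exact absurd hrx.symm (hx_root hr)
    · exact absurd hxs (hx_root hs)
  · obtain ⟨s, hs, hys⟩ := hR.exists_reachable y
    have hs : s ∈ R := mem_of_mem_insert_of_ne hs fun h => hxy (h ▸ hys.symm)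
    intro v
    obtain ⟨r, hr, hvr⟩ := hR.exists_reachable v
    rcases mem_insert.1 hr with hrx | hr
    · rw [hrx] at hvr
      exact ⟨s, hs, (reachable_sup_edge_iff hne).2 (.inr (.inl ⟨hvr, hys⟩))⟩
    · exact ⟨r, hr, hvr.mono le_sup_left⟩

/-- The edge from `x` to `y` is the first edge of the path in `G` from `x` to its root in `R`. -/
def IsTowardRoot (G : SimpleGraph V) (R : Finset V) (x y : V) : Prop :=
  G.Adj x y ∧ ∀ r ∈ R, ¬ (G.deleteEdges {s(x, y)}).Reachable x r

lemma IsRootSet.isTowardRoot_sup_edge [DecidableEq V] (hR : IsRootSet H (insert x R))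
    (hx : x ∉ R) (hxy : ¬ H.Reachable x y) : IsTowardRoot (H ⊔ .edge x y) R x y := by
  refine ⟨.inr ((SimpleGraph.adj_edge x y).2 ⟨rfl, fun h => hxy (h ▸ .rfl)⟩), fun r hr hxr => hx ?_⟩
  rw [sup_edge_deleteEdges fun h => hxy h.reachable] at hxr
  exact hR.eq_of_reachable x (mem_insert_self x R) r (mem_insert_of_mem hr) hxr ▸ hr

lemma IsTowardRoot.isRootSet_deleteEdges [DecidableEq V] (h : IsTowardRoot G R x y)
    (hR : IsRootSet G R) : IsRootSet (G.deleteEdges {s(x, y)}) (insert x R) := by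
  obtain ⟨hadj, hx⟩ := h
  have hle : G.deleteEdges {s(x, y)} ≤ G := SimpleGraph.deleteEdges_le _
  constructor
  · simp only [mem_insert]
    rintro r (rfl | hr) s (rfl | hs) hrs
    · rfl
    · exact absurd hrs (hx s hs)
    · exact absurd hrs.symm (hx r hr)
    · exact hR.eq_of_reachable r hr s hs (hrs.mono hle)
  · intro v
    obtain ⟨r, hr, hvr⟩ := hR.exists_reachable v
    rw [← deleteEdges_sup_edge hadj, reachable_sup_edge_iff hadj.ne] at hvr
    rcases hvr with hvr | ⟨hvx, -⟩ | ⟨-, hxr⟩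
    · exact ⟨r, mem_insert_of_mem hr, hvr⟩
    · exact ⟨x, mem_insert_self x R, hvx⟩
    · exact absurd hxr (hx r hr)

lemma IsRootSet.exists_isTowardRoot (hR : IsRootSet G R) (hG : G.IsAcyclic) (hx : x ∉ R) :
    ∃ y, IsTowardRoot G R x y := by
  obtain ⟨r, hr, hxr⟩ := hR.exists_reachable x
  obtain ⟨p, hp⟩ := hxr.exists_isPath
  cases p with
  | nil => exact absurd hr hx
  | @cons _ y _ hxy q =>
    refine ⟨y, hxy, fun s hs hxs => not_reachable_deleteEdges hG hxy ?_⟩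
    have hle : G.deleteEdges {s(x, y)} ≤ G := SimpleGraph.deleteEdges_le _
    obtain rfl : s = r := hR.eq_of_reachable s hs r hr ((hxs.mono hle).symm.trans hxr)
    have hq : s(x, y) ∉ q.edges := fun h =>
      ((SimpleGraph.Walk.cons_isPath_iff _ _).1 hp).2 (q.fst_mem_support_of_mem_edges h)
    exact hxs.trans (q.toDeleteEdge _ hq).reachable.symm

lemma IsRootSet.isTowardRoot_unique (hR : IsRootSet G R) (hG : G.IsAcyclic) {z : V}
    (hy : IsTowardRoot G R x y) (hz : IsTowardRoot G R x z) : y = z := by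
  by_contra hne
  obtain ⟨r, hr, hxr⟩ := hR.exists_reachable x
  have hzr : (G.deleteEdges {s(x, z)}).Reachable z r := by
    have h := hz.2 r hr
    rw [← deleteEdges_sup_edge hz.1, reachable_sup_edge_iff hz.1.ne] at hxr
    tauto
  have hxy : (G.deleteEdges {s(x, z)}).Adj x y := by
    simpa [hy.1, hne] using fun _ => hy.1.ne'
  have hzx : (G.deleteEdges {s(x, y)}).Adj z x := by
    simpa [hz.1.symm, Ne.symm hne] using fun h => absurd h.symm hz.1.ne
  have hle : (G.deleteEdges {s(x, z)}).deleteEdges {s(x, y)} ≤ G.deleteEdges {s(x, y)} :=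
    SimpleGraph.deleteEdges_mono (SimpleGraph.deleteEdges_le _)
  -- The path from `z` to the root avoids `xz`, and it avoids `xy` as there is no cycle; so `x`
  -- reaches the root through `z` without `xy`.
  rw [← deleteEdges_sup_edge hxy, reachable_sup_edge_iff hxy.ne] at hzr
  rcases hzr with hzr | ⟨hzx', -⟩ | ⟨-, hxr⟩
  · exact hy.2 r hr (hzx.symm.reachable.trans (hzr.mono hle))
  · exact not_reachable_deleteEdges hG hz.1 (hzx'.symm.mono (SimpleGraph.deleteEdges_le _))
  · exact hy.2 r hr (hxr.mono hle)

lemma reachable_simpleGraph {W : Type*} (e : V ≃ W) {u v : V} :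
    (e.simpleGraph G).Reachable (e u) (e v) ↔ G.Reachable u v :=
  (SimpleGraph.Iso.comap e.symm G).symm.reachable_iff

lemma isAcyclic_simpleGraph {W : Type*} (e : V ≃ W) :
    (e.simpleGraph G).IsAcyclic ↔ G.IsAcyclic :=
  (SimpleGraph.Iso.comap e.symm G).isAcyclic_iff

lemma isRootSet_simpleGraph {W : Type*} (e : V ≃ W) {S : Finset W}
    (hS : ∀ v, e v ∈ S ↔ v ∈ R) : IsRootSet (e.simpleGraph G) S ↔ IsRootSet G R := by
  simp only [isRootSet_iff, e.surjective.forall, e.surjective.exists, reachable_simpleGraph, hS,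
    e.injective.eq_iff]

variable [Fintype V]

lemma IsRootSet.eq_bot_of_univ (hG : IsRootSet G univ) : G = ⊥ := by
  ext u v
  simpa using fun h : G.Adj u v =>
    h.ne (hG.eq_of_reachable u (mem_univ u) v (mem_univ v) h.reachable)

lemma IsRootSet.ncard_edgeSet_add_card (hR : IsRootSet G R) (hG : G.IsAcyclic) :
    G.edgeSet.ncard + #R = Fintype.card V := by
  classical
  induction hm : Fintype.card V - #R generalizing G R with
  | zero =>
    obtain rfl : R = univ := (card_eq_iff_eq_univ R).1 (by have := card_le_univ R; omega)
    simp [hR.eq_bot_of_univ]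
  | succ m ih =>
    obtain ⟨x, hx⟩ : ∃ x, x ∉ R := by
      by_contra! h
      simp [eq_univ_of_forall h] at hm
    obtain ⟨y, hxy⟩ := hR.exists_isTowardRoot hG hx
    have := ih (hxy.isRootSet_deleteEdges hR) (hG.anti (SimpleGraph.deleteEdges_le _))
      (by rw [card_insert_of_notMem hx]; omega)
    rw [SimpleGraph.edgeSet_deleteEdges, card_insert_of_notMem hx] at this
    have := Set.ncard_sdiff_singleton_add_one (G.mem_edgeSet.2 hxy.1) (Set.toFinite _)
    omega

open Classical in
lemma IsRootSet.sum_card_not_reachable (hR : IsRootSet G R) :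
    ∑ x ∈ R, #{y | ¬ G.Reachable x y} = (#R - 1) * Fintype.card V := by
  have hroot (y : V) : #{x ∈ R | G.Reachable x y} = 1 := by
    obtain ⟨r, hr, hyr⟩ := hR.exists_reachable y
    refine card_eq_one.2 ⟨r, ext fun s => ?_⟩
    rw [mem_filter, mem_singleton]
    exact ⟨fun ⟨hs, hsy⟩ => hR.eq_of_reachable s hs r hr (hsy.trans hyr),
      fun h => h ▸ ⟨hr, hyr.symm⟩⟩
  have hreach : ∑ x ∈ R, #{y | G.Reachable x y} = Fintype.card V := by
    simpa [bipartiteAbove, bipartiteBelow, hroot] using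
      sum_card_bipartiteAbove_eq_sum_card_bipartiteBelow (s := R) (t := univ) G.Reachable
  have hsum : ∑ x ∈ R, (#{y | G.Reachable x y} + #{y | ¬ G.Reachable x y}) =
      #R * Fintype.card V := by
    simp [card_filter_add_card_filter_not]
  rw [sum_add_distrib, hreach] at hsum
  rw [Nat.sub_mul, ← hsum]
  omega

open Classical in
/-- The forests on `V` whose trees each contain exactly one vertex of `R`. -/
noncomputable def rootedForests (R : Finset V) : Finset (SimpleGraph V) :=
  {G | G.IsAcyclic ∧ IsRootSet G R}

lemma mem_rootedForests : G ∈ rootedForests R ↔ G.IsAcyclic ∧ IsRootSet G R := by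
  simp [rootedForests]

lemma rootedForests_univ : rootedForests (univ : Finset V) = {⊥} := by
  ext G
  rw [mem_rootedForests, mem_singleton]
  constructor
  · rintro ⟨-, hG⟩
    exact hG.eq_bot_of_univ
  · rintro rfl
    exact ⟨SimpleGraph.isAcyclic_bot, by simp, fun v => ⟨v, mem_univ v, .rfl⟩⟩

lemma card_rootedForests_congr {R S : Finset V} (h : #R = #S) :
    #(rootedForests R) = #(rootedForests S) := by
  classical
  let σ : V ≃ V := (equivOfCardEq h).extendSubtype
  have hσ (v : V) : σ v ∈ S ↔ v ∈ R := by
    by_cases hv : v ∈ R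
    · simpa [hv, σ] using (equivOfCardEq h).extendSubtype_mem v hv
    · simpa [hv, σ] using (equivOfCardEq h).extendSubtype_not_mem v hv
  refine card_equiv σ.simpleGraph fun G => ?_
  rw [mem_rootedForests, mem_rootedForests, isAcyclic_simpleGraph, isRootSet_simpleGraph σ hσ]

open Classical in
lemma card_rootedForests_eq_sum (hx : x ∉ R) :
    #(rootedForests R) = ∑ H ∈ rootedForests (insert x R), #{y | ¬ H.Reachable x y} := by
  rw [← card_sigma]
  symm
  refine card_bij (fun p _ => p.1 ⊔ .edge x p.2) ?_ ?_ ?_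
  · simp only [mem_sigma, mem_rootedForests, mem_filter_univ]
    exact fun p ⟨⟨hH, hR⟩, hxy⟩ => ⟨hH.sup_edge_of_not_reachable hxy, hR.sup_edge hx hxy⟩
  · rintro ⟨H, y⟩ hy ⟨H', z⟩ hz heq
    simp only [mem_sigma, mem_rootedForests, mem_filter_univ] at hy hz heq
    obtain ⟨⟨hH, hR⟩, hxy⟩ := hy
    obtain ⟨⟨-, hR'⟩, hxz⟩ := hz
    obtain rfl : y = z := (hR.sup_edge hx hxy).isTowardRoot_unique
      (hH.sup_edge_of_not_reachable hxy) (hR.isTowardRoot_sup_edge hx hxy)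
      (heq ▸ hR'.isTowardRoot_sup_edge hx hxz)
    obtain rfl : H = H' := by
      rw [← sup_edge_deleteEdges fun h => hxy h.reachable, heq,
        sup_edge_deleteEdges fun h => hxz h.reachable]
    rfl
  · simp only [mem_sigma, mem_rootedForests, mem_filter_univ]
    rintro G ⟨hG, hR⟩
    obtain ⟨y, hxy⟩ := hR.exists_isTowardRoot hG hx
    exact ⟨⟨G.deleteEdges {s(x, y)}, y⟩, ⟨⟨hG.anti (SimpleGraph.deleteEdges_le _),
      hxy.isRootSet_deleteEdges hR⟩, not_reachable_deleteEdges hG hxy.1⟩,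
      deleteEdges_sup_edge hxy.1⟩

open Classical in
lemma card_mul_card_rootedForests_erase (hx : x ∈ R) :
    #R * #(rootedForests (R.erase x)) = #(rootedForests R) * ((#R - 1) * Fintype.card V) := by
  calc #R * #(rootedForests (R.erase x)) = ∑ z ∈ R, #(rootedForests (R.erase z)) :=
        (sum_const_nat fun z hz => card_rootedForests_congr (by
          rw [card_erase_of_mem hz, card_erase_of_mem hx])).symm
    _ = ∑ z ∈ R, ∑ H ∈ rootedForests R, #{y | ¬ H.Reachable z y} :=
        sum_congr rfl fun z hz => by
          rw [card_rootedForests_eq_sum (notMem_erase z R), insert_erase hz]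
    _ = #(rootedForests R) * ((#R - 1) * Fintype.card V) := by
        rw [sum_comm]
        exact sum_const_nat fun H hH => (mem_rootedForests.1 hH).2.sum_card_not_reachable

theorem card_rootedForests_mul_card (R : Finset V) :
    #(rootedForests R) * Fintype.card V = #R * Fintype.card V ^ (Fintype.card V - #R) := by
  classical
  induction hm : Fintype.card V - #R generalizing R with
  | zero =>
    obtain rfl : R = univ := (card_eq_iff_eq_univ R).1 (by have := card_le_univ R; omega)
    simp [rootedForests_univ]
  | succ m ih =>
    obtain ⟨x, hx⟩ : ∃ x, x ∉ R := by
      by_contra! h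
      simp [eq_univ_of_forall h] at hm
    have hcard : #(insert x R) = #R + 1 := card_insert_of_notMem hx
    have hrec := card_mul_card_rootedForests_erase (mem_insert_self x R)
    rw [erase_insert hx, hcard, Nat.add_sub_cancel] at hrec
    have hih := ih (insert x R) (by omega)
    rw [hcard] at hih
    refine Nat.eq_of_mul_eq_mul_left (Nat.succ_pos #R) ?_
    calc (#R + 1) * (#(rootedForests R) * Fintype.card V)
        = #R * Fintype.card V * (#(rootedForests (insert x R)) * Fintype.card V) := by
          rw [← mul_assoc, hrec]; ring
      _ = (#R + 1) * (#R * Fintype.card V ^ (m + 1)) := by rw [hih]; ring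

end RootedForests

section NoncrossingWords

variable {ι : Type*}

/-- A word in which no two distinct letters alternate as `x … y … x … y`. -/
def IsNoncrossingWord (w : List ι) : Prop :=
  ∀ x y, List.Sublist [x, y, x, y] w → x = y

lemma IsNoncrossingWord.sublist {v w : List ι} (hw : IsNoncrossingWord w) (h : v.Sublist w) :
    IsNoncrossingWord v :=
  fun x y hxy => hw x y (hxy.trans h)

lemma IsNoncrossingWord.replicate {x : ι} {u v : List ι} (h : IsNoncrossingWord (u ++ x :: v))
    (m : ℕ) : IsNoncrossingWord (u ++ (List.replicate m x ++ v)) := by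
  intro a c hac
  by_contra hne
  refine hne (h a c ?_)
  obtain ⟨l₁, l', hl, h₁, h'⟩ := List.sublist_append_iff.1 hac
  obtain ⟨l₂, l₃, rfl, h₂, h₃⟩ := List.sublist_append_iff.1 h'
  obtain ⟨j, -, rfl⟩ := List.sublist_replicate_iff.1 h₂
  have hj : j ≤ 1 := by
    have hchain : List.IsChain (· ≠ ·) [a, c, a, c] := by simp [hne, Ne.symm hne]
    rw [hl] at hchain
    by_contra! hj
    obtain ⟨j, rfl⟩ := Nat.exists_eq_add_of_le' hj
    simpa [List.replicate_succ] using hchain.right_of_append.left_of_append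
  rw [hl, ← List.singleton_append]
  exact h₁.append (((List.replicate_sublist_replicate x).2 hj).append h₃)

lemma IsNoncrossingWord.insert {x : ι} {u v : List ι} (h : IsNoncrossingWord (u ++ v))
    (hu : x ∉ u) (hv : x ∉ v) : IsNoncrossingWord (u ++ x :: v) := by
  classical
  intro a c hac
  have hcount : (u ++ x :: v).count x = 1 := by
    simp [List.count_eq_zero.2 hu, List.count_eq_zero.2 hv]
  have ha : a ≠ x := by
    rintro rfl
    have := hac.count_le a
    grind
  have hc : c ≠ x := by
    rintro rfl
    have := hac.count_le c
    grind
  refine h a c ?_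
  simpa [List.erase_append_right _ hu, List.erase_of_not_mem, ha, hc] using hac.erase x

/-- The fibres of `f` are pairwise noncrossing subsets of the ordered set `α`. -/
def IsNoncrossing {α : Type*} [LT α] (f : α → ι) : Prop :=
  ∀ a b c d, a < b → b < c → c < d → f a = f c → f b = f d → f a = f b

lemma isNoncrossingWord_ofFn {n : ℕ} {f : Fin n → ι} :
    IsNoncrossingWord (List.ofFn f) ↔ IsNoncrossing f := by
  rw [List.ofFn_eq_map]
  constructor
  · intro h a b c d hab hbc hcd hac hbd
    have hlt : [a, b, c, d].SortedLT := by
      simp [List.sortedLT_iff_isChain, hab, hbc, hcd]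
    have hsub : [a, b, c, d].Sublist (List.finRange n) :=
      List.sublist_of_subperm_of_sortedLE (hlt.nodup.subperm fun v _ => List.mem_finRange v)
        hlt.sortedLE (List.sortedLT_finRange n).sortedLE
    exact h (f a) (f b) (by simpa [← hac, ← hbd] using hsub.map f)
  · intro h x y hxy
    obtain ⟨l, hl, hmap⟩ := List.sublist_map_iff.1 hxy
    obtain ⟨a, b, c, d, rfl⟩ := List.length_eq_four.1 (by
      simpa using congrArg List.length hmap.symm)
    have hlt := (List.pairwise_lt_finRange n).sublist hl
    simp only [List.map_cons, List.map_nil, List.cons.injEq, and_true] at hmap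
    obtain ⟨rfl, rfl, hac, hbd⟩ := hmap
    simp only [List.pairwise_cons, List.mem_cons, forall_eq_or_imp] at hlt
    exact h a b c d hlt.1.1 hlt.2.1.1 hlt.2.2.1.1 hac hbd

/-- The letters due in `σ` form runs of equal letters, and none of them is in `S`. -/
structure IsStack (σ : List ι) (S : Finset ι) : Prop where
  contiguous : ∀ x y, List.Sublist [x, y, x] σ → x = y
  disjoint : ∀ x ∈ σ, x ∉ S

variable {σ : List ι} {S : Finset ι} {x : ι}

lemma IsStack.tail (h : IsStack (x :: σ) S) : IsStack σ S :=
  ⟨fun y z hyz => h.contiguous y z (hyz.cons x), fun y hy => h.disjoint y (.tail x hy)⟩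

lemma ncard_eq_sum_ncard_cons [Fintype ι] {s : Set (List ι)} (hs : s.Finite) (hnil : [] ∉ s) :
    s.ncard = ∑ x, {w | x :: w ∈ s}.ncard := by
  have hfinite (x : ι) : Finite {w | x :: w ∈ s} :=
    hs.preimage (List.cons_injective (a := x)).injOn
  simp only [← Nat.card_coe_set_eq]
  rw [← Nat.card_sigma]
  refine (Nat.card_eq_of_bijective
    (fun p : Σ x, {w | x :: w ∈ s} => (⟨p.1 :: p.2, p.2.2⟩ : s)) ⟨?_, ?_⟩).symm
  · rintro ⟨x, w, hw⟩ ⟨y, v, hv⟩ h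
    obtain ⟨rfl, rfl⟩ : x = y ∧ w = v := by simpa using h
    rfl
  · rintro ⟨_ | ⟨x, w⟩, hw⟩
    · exact absurd hw hnil
    · exact ⟨⟨x, w, hw⟩, rfl⟩

variable [DecidableEq ι]

lemma count_ofFn {n : ℕ} (f : Fin n → ι) (i : ι) : (List.ofFn f).count i = #{v | f v = i} := by
  rw [← Multiset.coe_count, ← Fin.univ_val_map, Multiset.count_map]
  simp [eq_comm, Finset.card_def]

/-- The word `w` completes the stack `σ` of letters still due: it uses the letters of `σ`, and
each letter `i ∈ S` another `b i` times, and reading the stack from bottom to top and then `w`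
gives a noncrossing word. -/
structure IsCompletion (b : ι → ℕ) (σ : List ι) (S : Finset ι) (w : List ι) : Prop where
  count_eq : ∀ i, w.count i = σ.count i + if i ∈ S then b i else 0
  isNoncrossingWord : IsNoncrossingWord (σ.reverse ++ w)

variable {b : ι → ℕ} {w : List ι}

lemma IsStack.push (h : IsStack σ S) (hx : x ∈ S) (m : ℕ) :
    IsStack (List.replicate m x ++ σ) (S.erase x) := by
  have hxσ : x ∉ σ := fun hσ => h.disjoint x hσ hx
  constructor
  · intro a c hac
    by_contra hne
    obtain ⟨l, l', hl, h₁, h₂⟩ := List.sublist_append_iff.1 hac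
    obtain ⟨j, -, rfl⟩ := List.sublist_replicate_iff.1 h₁
    match j with
    | 0 => exact hne (h.contiguous a c (by simpa [hl] using h₂))
    | 1 =>
      obtain ⟨rfl, rfl⟩ : a = x ∧ [c, a] = l' := by simpa using hl
      exact hxσ (h₂.mem (by simp))
    | j + 2 =>
      obtain ⟨rfl, rfl, -⟩ : a = x ∧ c = x ∧ [a] = List.replicate j x ++ l' := by
        simpa [List.replicate_succ] using hl
      exact hne rfl
  · intro a ha
    rcases List.mem_append.1 ha with ha | ha
    · simp [List.eq_of_mem_replicate ha]
    · exact fun h' => h.disjoint a ha (mem_of_mem_erase h')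

lemma IsCompletion.pop (h : IsCompletion b σ S (x :: w)) (hx : x ∉ S) :
    ∃ σ', σ = x :: σ' ∧ IsCompletion b σ' S w := by
  cases σ with
  | nil => simpa [hx] using h.count_eq x
  | cons z σ =>
    obtain rfl : x = z := by
      by_contra hne
      have hxσ : x ∈ σ := by
        have := h.count_eq x
        grind
      have hzw : z ∈ w := by
        have := h.count_eq z
        grind
      refine hne (h.isNoncrossingWord x z ?_)
      rw [List.reverse_cons, List.append_assoc]
      exact (List.singleton_sublist.2 (List.mem_reverse.2 hxσ)).append
        (.cons_cons z (.cons_cons x (List.singleton_sublist.2 hzw)))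
    refine ⟨σ, rfl, fun i => ?_, h.isNoncrossingWord.sublist ?_⟩
    · have := h.count_eq i
      grind
    · simp

lemma IsCompletion.push (h : IsCompletion b σ S (x :: w)) (hσ : IsStack σ S) (hx : x ∈ S) :
    IsCompletion b (List.replicate (b x - 1) x ++ σ) (S.erase x) w := by
  constructor
  · intro i
    have := h.count_eq i
    have hxσ : σ.count x = 0 := List.count_eq_zero.2 fun hσx => hσ.disjoint x hσx hx
    by_cases hi : i = x
    · subst hi
      rw [List.count_cons_self, hxσ, if_pos hx] at this
      rw [List.count_append, List.count_replicate_self, hxσ, if_neg (notMem_erase _ _)]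
      omega
    · grind
  · simpa using h.isNoncrossingWord.replicate (b x - 1)

lemma IsCompletion.cons_of_pop (h : IsCompletion b σ S w) (hσ : IsStack (x :: σ) S) :
    IsCompletion b (x :: σ) S (x :: w) := by
  have hxS : x ∉ S := hσ.disjoint x (.head σ)
  refine ⟨fun i => by have := h.count_eq i; grind, ?_⟩
  have hxw := h.count_eq x
  cases σ with
  | nil =>
    have hx : x ∉ w := List.count_eq_zero.1 (by simpa [hxS] using hxw)
    simpa using (h.isNoncrossingWord.insert List.not_mem_nil hx).replicate 2
  | cons z σ =>
    by_cases hxσ : x ∈ z :: σ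
    · obtain rfl : x = z := by
        rcases List.mem_cons.1 hxσ with hxz | hxσ
        · exact hxz
        · exact hσ.contiguous x z (.cons_cons x (.cons_cons z (List.singleton_sublist.2 hxσ)))
      have := h.isNoncrossingWord
      rw [List.reverse_cons, List.append_assoc] at this
      simpa using this.replicate 3
    · have hx : x ∉ w := List.count_eq_zero.1 (by
        simpa [hxS, List.count_eq_zero.2 hxσ] using hxw)
      simpa using (h.isNoncrossingWord.insert (by rwa [List.mem_reverse]) hx).replicate 2

lemma IsCompletion.cons_of_push
    (h : IsCompletion b (List.replicate (b x - 1) x ++ σ) (S.erase x) w) (hσ : IsStack σ S)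
    (hx : x ∈ S) (hb : 0 < b x) : IsCompletion b σ S (x :: w) := by
  have hxσ : x ∉ σ := fun hσx => hσ.disjoint x hσx hx
  have hxw : w.count x = b x - 1 := by
    simpa [List.count_eq_zero.2 hxσ] using h.count_eq x
  constructor
  · intro i
    have := h.count_eq i
    by_cases hi : i = x
    · subst hi
      rw [List.count_cons_self, hxw, List.count_eq_zero.2 hxσ, if_pos hx]
      omega
    · grind
  · have hw := h.isNoncrossingWord
    rw [List.reverse_append, List.reverse_replicate, List.append_assoc] at hw
    rcases Nat.eq_zero_or_pos (b x - 1) with hbx | hbx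
    · rw [hbx] at hw hxw
      exact hw.insert (by simpa using hxσ) (List.count_eq_zero.1 hxw)
    · refine hw.sublist ((List.Sublist.refl _).append ?_)
      exact ((List.replicate_sublist_replicate x).2 hbx).append (.refl w)

lemma isCompletion_cons_iff (hb : ∀ i, 0 < b i) (hσ : IsStack σ S) :
    IsCompletion b σ S (x :: w) ↔ (∃ σ', σ = x :: σ' ∧ IsCompletion b σ' S w) ∨
      (x ∈ S ∧ IsCompletion b (List.replicate (b x - 1) x ++ σ) (S.erase x) w) := by
  constructor
  · intro h
    by_cases hx : x ∈ S
    · exact .inr ⟨hx, h.push hσ hx⟩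
    · exact .inl (h.pop hx)
  · rintro (⟨σ', rfl, h⟩ | ⟨hx, h⟩)
    · exact h.cons_of_pop hσ
    · exact h.cons_of_push hσ hx (hb x)

lemma IsCompletion.length_eq [Finite ι] (h : IsCompletion b σ S w) :
    w.length = σ.length + ∑ i ∈ S, b i := by
  cases nonempty_fintype ι
  have hlength (l : List ι) : l.length = ∑ i, l.count i := by
    simpa using (Multiset.sum_count_eq_card (s := univ) (m := (l : Multiset ι)) (by simp)).symm
  simp [hlength, h.count_eq, sum_add_distrib]

/-- The number of completions of the stack `σ` by the letters of `S`. -/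
noncomputable def completionCount (b : ι → ℕ) (σ : List ι) (S : Finset ι) : ℕ :=
  {w | IsCompletion b σ S w}.ncard

lemma completionCount_nil_empty : completionCount b [] ∅ = 1 := by
  rw [completionCount, Set.ncard_eq_one]
  refine ⟨[], Set.eq_singleton_iff_unique_mem.2 ⟨⟨by simp, fun x y h => by simp at h⟩, ?_⟩⟩
  refine fun w hw => List.eq_nil_iff_forall_not_mem.2 fun i => List.count_eq_zero.1 ?_
  simpa using hw.count_eq i

lemma ncard_isCompletion_cons (hb : ∀ i, 0 < b i) (hσ : IsStack σ S) (x : ι) :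
    {w | IsCompletion b σ S (x :: w)}.ncard =
      (if σ.head? = some x then completionCount b σ.tail S else 0) +
        if x ∈ S then completionCount b (List.replicate (b x - 1) x ++ σ) (S.erase x) else 0 := by
  simp only [isCompletion_cons_iff hb hσ]
  by_cases hx : x ∈ S
  · have hhead : ∀ σ', σ ≠ x :: σ' := fun σ' h => hσ.disjoint x (by simp [h]) hx
    have hhead' : σ.head? ≠ some x := fun h => hhead _ (List.eq_cons_of_mem_head? h)
    simp [hx, hhead, hhead', completionCount]
  · cases σ with
    | nil => simp [hx]
    | cons z σ =>
      by_cases hz : z = x <;> simp [hx, hz, completionCount]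

lemma descFactorial_recursion {p s t r : ℕ} (hr : p + t = r + 1) (hs : s ≤ t)
    (ht : s = 0 → t = 0) :
    (r + 2) * (p * (r + 1).descFactorial s + (s * p + t) * (r + 1).descFactorial (s - 1)) =
      (r + 1) * ((p + 1) * (r + 2).descFactorial s) := by
  cases s with
  | zero =>
    obtain rfl : p = r + 1 := by simpa [ht rfl] using hr
    rw [ht rfl, Nat.descFactorial_zero, Nat.descFactorial_zero]
    ring
  | succ m =>
    obtain ⟨d, hd⟩ : ∃ d, r + 1 = m + d := Nat.exists_eq_add_of_le (by omega)
    have hmul : p * (r + 1 - m) + ((m + 1) * p + t) = (r + 1) * (p + 1) := by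
      rw [hd, Nat.add_sub_cancel_left]
      linarith [congrArg (· * p) hd, hr]
    rw [Nat.succ_descFactorial_succ (r + 1), Nat.descFactorial_succ (r + 1), Nat.add_sub_cancel]
    linear_combination (r + 2) * (r + 1).descFactorial m * hmul

lemma completionCount_eq_sum [Finite ι] (hb : ∀ i, 0 < b i) (hσ : IsStack σ S)
    (hpos : 0 < σ.length + ∑ i ∈ S, b i) : completionCount b σ S =
      (if σ = [] then 0 else completionCount b σ.tail S) +
        ∑ x ∈ S, completionCount b (List.replicate (b x - 1) x ++ σ) (S.erase x) := by
  cases nonempty_fintype ι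
  have hfinite : {w | IsCompletion b σ S w}.Finite :=
    (List.finite_length_eq ι _).subset fun _ hw => hw.length_eq
  have hnil : ¬ IsCompletion b σ S [] := fun h => hpos.ne h.length_eq
  rw [completionCount, ncard_eq_sum_ncard_cons hfinite hnil]
  simp only [Set.mem_ofPred_eq, ncard_isCompletion_cons hb hσ, sum_add_distrib]
  congr 1
  · cases σ <;> simp
  · simp

lemma succ_mul_completionCount [Finite ι] (hb : ∀ i, 0 < b i) (hσ : IsStack σ S) :
    (σ.length + ∑ i ∈ S, b i + 1) * completionCount b σ S =
      (σ.length + 1) * (σ.length + ∑ i ∈ S, b i + 1).descFactorial #S := by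
  induction hr : σ.length + ∑ i ∈ S, b i generalizing σ S with
  | zero =>
    obtain rfl : σ = [] := List.length_eq_zero_iff.1 (by omega)
    obtain rfl : S = ∅ := eq_empty_of_forall_notMem fun i hi =>
      (hb i).ne' (sum_eq_zero_iff.1 (Nat.eq_zero_of_add_eq_zero_left hr) i hi)
    simp [completionCount_nil_empty]
  | succ r ih =>
    have hrec := completionCount_eq_sum hb hσ (by omega)
    have hpop : (r + 1) * (if σ = [] then 0 else completionCount b σ.tail S) =
        σ.length * (r + 1).descFactorial #S := by
      cases σ with
      | nil => simp
      | cons x σ =>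
        simpa using ih hσ.tail (by rw [List.length_cons] at hr; omega)
    have hpush (x) (hx : x ∈ S) :
        (r + 1) * completionCount b (List.replicate (b x - 1) x ++ σ) (S.erase x) =
          (σ.length + b x) * (r + 1).descFactorial (#S - 1) := by
      have := hb x
      have hsum := add_sum_erase S b hx
      have hlength : (List.replicate (b x - 1) x ++ σ).length + 1 = σ.length + b x := by
        rw [List.length_append, List.length_replicate]
        omega
      rw [ih (hσ.push hx (b x - 1)) (by omega), hlength, card_erase_of_mem hx]
    have htotal : (r + 1) * completionCount b σ S = σ.length * (r + 1).descFactorial #S +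
        (#S * σ.length + ∑ x ∈ S, b x) * (r + 1).descFactorial (#S - 1) := by
      rw [hrec, mul_add, hpop, mul_sum, sum_congr rfl hpush, ← sum_mul, sum_add_distrib,
        sum_const, smul_eq_mul]
    have hS : #S ≤ ∑ x ∈ S, b x := by
      simpa using card_nsmul_le_sum S b 1 fun i _ => hb i
    have hS' : #S = 0 → ∑ x ∈ S, b x = 0 := fun h => by simp [card_eq_zero.1 h]
    refine Nat.eq_of_mul_eq_mul_left r.succ_pos ?_
    rw [mul_left_comm, htotal]
    exact descFactorial_recursion hr hS hS'

variable [Fintype ι]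

open Classical in
/-- The maps from `Fin n` to `ι` with pairwise noncrossing fibres, the fibre of `i` having
`b i` elements. -/
noncomputable def noncrossingMaps (n : ℕ) (b : ι → ℕ) : Finset (Fin n → ι) :=
  {f | IsNoncrossing f ∧ ∀ i, #{v | f v = i} = b i}

lemma mem_noncrossingMaps {n : ℕ} {f : Fin n → ι} :
    f ∈ noncrossingMaps n b ↔ IsNoncrossing f ∧ ∀ i, #{v | f v = i} = b i := by
  simp [noncrossingMaps]

theorem succ_mul_card_noncrossingMaps {n : ℕ} (hb : ∀ i, 0 < b i) (hn : ∑ i, b i = n) :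
    (n + 1) * #(noncrossingMaps n b) = (n + 1).descFactorial (Fintype.card ι) := by
  have himage : {w | IsCompletion b [] univ w} =
      List.ofFn '' (noncrossingMaps n b : Set (Fin n → ι)) := by
    ext w
    simp only [Set.mem_image, mem_coe, mem_noncrossingMaps]
    constructor
    · intro hw
      obtain rfl : w.length = n := by rw [hw.length_eq, ← hn]; simp
      refine ⟨w.get, ⟨isNoncrossingWord_ofFn.1 ?_, fun i => ?_⟩, List.ofFn_get w⟩
      · simpa using hw.isNoncrossingWord
      · rw [← count_ofFn, List.ofFn_get, hw.count_eq]
        simp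
    · rintro ⟨f, ⟨hf, hfb⟩, rfl⟩
      exact ⟨fun i => by simp [count_ofFn, hfb], by simpa using isNoncrossingWord_ofFn.2 hf⟩
  have hstack : IsStack ([] : List ι) univ := ⟨fun x y h => by simp at h, by simp⟩
  have hcount := succ_mul_completionCount hb hstack
  rw [completionCount, himage, Set.ncard_image_of_injective _ List.ofFn_injective,
    Set.ncard_coe_finset] at hcount
  simpa [hn] using hcount

end NoncrossingWords

section NoncrossingComponents

variable {α : Type*} [LinearOrder α] {G : SimpleGraph α} {s t x y : α}

-- Whether the chord `uv` separates `s` from `t` on the circle is symmetric in the two pairs.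
lemma mem_Ioo_iff_of_reachable (hs : ¬ G.Reachable x s) (ht : ¬ G.Reachable x t)
    (hst : ∀ u v, G.Reachable x u → G.Adj u v → (s ∈ Set.Ioo u v ↔ t ∈ Set.Ioo u v))
    (hxy : G.Reachable x y) : x ∈ Set.Ioo s t ↔ y ∈ Set.Ioo s t := by
  rw [SimpleGraph.reachable_iff_reflTransGen] at hxy
  induction hxy with
  | refl => rfl
  | @tail u v hxu huv ih =>
    rw [← SimpleGraph.reachable_iff_reflTransGen] at hxu
    have hxv := hxu.trans huv.reachable
    have hne {z w : α} (hz : ¬ G.Reachable x z) (hw : G.Reachable x w) : z ≠ w :=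
      fun h => hz (h ▸ hw)
    have := hne hs hxu
    have := hne ht hxu
    have := hne hs hxv
    have := hne ht hxv
    have huv_iff := hst u v hxu huv
    have hvu_iff := hst v u hxv huv.symm
    rw [ih]
    simp only [Set.mem_Ioo] at huv_iff hvu_iff ⊢
    grind

lemma mem_Ioo_of_adj
    (hG : ∀ a b c d, a < b → b < c → c < d → G.Adj a c → G.Adj b d → G.Reachable a b)
    (hxy : G.Adj x y) (hst : G.Adj s t) (hsx : ¬ G.Reachable s x) (hs : s ∈ Set.Ioo x y) :
    t ∈ Set.Ioo x y := by
  have htx : t ≠ x := by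
    rintro rfl
    exact hsx hst.reachable
  have hty : t ≠ y := by
    rintro rfl
    exact hsx (hst.reachable.trans hxy.reachable.symm)
  by_contra ht
  rcases htx.lt_or_gt with htx | hxt
  · exact hsx (hst.reachable.trans (hG t x s y htx hs.1 hs.2 hst.symm hxy))
  · have hyt : y < t := hty.lt_or_gt.resolve_left fun hty => ht ⟨hxt, hty⟩
    exact hsx (hG x s y t hs.1 hs.2 hyt hxy hst).symm

lemma mem_Ioo_iff_of_adj_of_reachable
    (hG : ∀ a b c d, a < b → b < c → c < d → G.Adj a c → G.Adj b d → G.Reachable a b)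
    (hst : G.Adj s t) (hs : ¬ G.Reachable x s) (hxy : G.Reachable x y) :
    x ∈ Set.Ioo s t ↔ y ∈ Set.Ioo s t := by
  have ht : ¬ G.Reachable x t := fun h => hs (h.trans hst.reachable.symm)
  exact mem_Ioo_iff_of_reachable hs ht (fun u v hxu huv =>
    ⟨mem_Ioo_of_adj hG huv hst fun h => hs (hxu.trans h.symm),
      mem_Ioo_of_adj hG huv hst.symm fun h => ht (hxu.trans h.symm)⟩) hxy

theorem isNoncrossing_connectedComponentMk
    (hG : ∀ a b c d, a < b → b < c → c < d → G.Adj a c → G.Adj b d → G.Reachable a b) :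
    IsNoncrossing G.connectedComponentMk := by
  intro a b c d hab hbc hcd hac hbd
  rw [SimpleGraph.ConnectedComponent.eq] at hac hbd ⊢
  by_contra hne
  have hb {u} (hu : G.Reachable a u) : ¬ G.Reachable b u := fun h => hne (hu.trans h.symm)
  have := mem_Ioo_iff_of_reachable hne (fun h => hne (h.trans hbd.symm))
    (fun u v hu huv => mem_Ioo_iff_of_adj_of_reachable hG huv (hb hu) hbd) hac
  grind

end NoncrossingComponents

section FiberForests

variable {V W ι κ : Type*}

/-- `G` is a forest whose trees span the nonempty fibres of `f`. -/
structure IsFiberForest (f : V → ι) (G : SimpleGraph V) : Prop where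
  isAcyclic : G.IsAcyclic
  reachable_iff : ∀ u v, G.Reachable u v ↔ f u = f v

lemma isFiberForest_simpleGraph {f : V → ι} {g : W → ι} {G : SimpleGraph V} (e : V ≃ W)
    (he : ∀ v, g (e v) = f v) : IsFiberForest g (e.simpleGraph G) ↔ IsFiberForest f G := by
  have hreach : (∀ u v, (e.simpleGraph G).Reachable u v ↔ g u = g v) ↔
      ∀ u v, G.Reachable u v ↔ f u = f v := by
    simp only [e.surjective.forall, reachable_simpleGraph, he]
  exact ⟨fun h => ⟨(isAcyclic_simpleGraph e).1 h.1, hreach.1 h.2⟩,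
    fun h => ⟨(isAcyclic_simpleGraph e).2 h.1, hreach.2 h.2⟩⟩

lemma IsFiberForest.exists_connectedComponent_equiv {f : V → ι} {G : SimpleGraph V}
    (h : IsFiberForest f G) (hf : f.Surjective) :
    ∃ e : G.ConnectedComponent ≃ ι, ∀ v, e (G.connectedComponentMk v) = f v := by
  let φ : G.ConnectedComponent → ι :=
    SimpleGraph.ConnectedComponent.lift f fun u v p _ => (h.reachable_iff u v).1 p.reachable
  have hφ : φ.Bijective := by
    constructor
    · refine SimpleGraph.ConnectedComponent.ind₂ fun u v huv => ?_
      exact SimpleGraph.ConnectedComponent.sound ((h.reachable_iff u v).2 huv)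
    · intro i
      obtain ⟨v, rfl⟩ := hf i
      exact ⟨G.connectedComponentMk v, rfl⟩
  exact ⟨.ofBijective φ hφ, fun v => rfl⟩

-- `g x` is the root of the component of `inr x`.
lemma isRootSet_map_inl_iff [Fintype ι] {G : SimpleGraph (ι ⊕ κ)} :
    IsRootSet G (univ.map .inl) ↔
      ∃ g : κ → ι, ∀ u v, G.Reachable u v ↔ Sum.elim id g u = Sum.elim id g v := by
  constructor
  · intro hR
    have hexists : ∀ x, ∃ i, G.Reachable (.inr x) (.inl i) := fun x => by
      simpa using hR.exists_reachable (.inr x)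
    choose g hg using hexists
    have hroot (v : ι ⊕ κ) : G.Reachable v (.inl (Sum.elim id g v)) := by
      cases v with
      | inl i => exact .rfl
      | inr x => exact hg x
    refine ⟨g, fun u v => ⟨fun huv => Sum.inl_injective (β := κ) ?_, fun huv => ?_⟩⟩
    · exact hR.eq_of_reachable _ (by simp) _ (by simp)
        ((hroot u).symm.trans (huv.trans (hroot v)))
    · exact (hroot u).trans (huv ▸ (hroot v).symm)
  · rintro ⟨g, hg⟩
    constructor
    · simp [hg]
    · exact fun v => ⟨.inl (Sum.elim id g v), by simp, by simp [hg]⟩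

variable [Fintype V] [Fintype W]

open Classical in
/-- The forests whose trees span the nonempty fibres of `f`. -/
noncomputable def fiberForests (f : V → ι) : Finset (SimpleGraph V) :=
  {G | IsFiberForest f G}

lemma mem_fiberForests {f : V → ι} {G : SimpleGraph V} :
    G ∈ fiberForests f ↔ IsFiberForest f G := by
  simp [fiberForests]

lemma card_fiberForests_congr [DecidableEq ι] {f : V → ι} {g : W → ι}
    (h : ∀ i, #{v | f v = i} = #{w | g w = i}) : #(fiberForests f) = #(fiberForests g) := by
  have hfiber (i : ι) : Fintype.card {v // f v = i} = Fintype.card {w // g w = i} := by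
    rw [Fintype.card_subtype, Fintype.card_subtype, h]
  let e : V ≃ W := Equiv.ofFiberEquiv fun i => Fintype.equivOfCardEq (hfiber i)
  refine card_equiv e.simpleGraph fun G => ?_
  rw [mem_fiberForests, mem_fiberForests,
    isFiberForest_simpleGraph e fun v => Equiv.ofFiberEquiv_map _ v]

lemma card_rootedForests_eq_sum_card_fiberForests [Fintype ι] [Fintype κ] [DecidableEq κ] :
    #(rootedForests (univ.map .inl : Finset (ι ⊕ κ))) =
      ∑ g : κ → ι, #(fiberForests (Sum.elim id g)) := by
  classical
  rw [← card_biUnion]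
  · congr 1
    ext G
    simp only [mem_rootedForests, isRootSet_map_inl_iff, mem_biUnion, mem_univ, true_and,
      mem_fiberForests]
    exact ⟨fun ⟨hG, g, hg⟩ => ⟨g, hG, hg⟩, fun ⟨g, hG, hg⟩ => ⟨hG, g, hg⟩⟩
  · intro g _ h _ hne
    refine disjoint_left.2 fun G hg hh => hne (funext fun x => ?_)
    rw [mem_fiberForests] at hg hh
    have hx : G.Reachable (.inr x) (.inl (g x)) := by simp [hg.reachable_iff]
    simpa using ((hh.reachable_iff _ _).1 hx).symm

lemma card_filter_sumElim_id [Fintype ι] [Fintype κ] [DecidableEq ι] (g : κ → ι) (i : ι) :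
    #{v | Sum.elim id g v = i} = #{x | g x = i} + 1 := by
  rw [card_filter, card_filter, Fintype.sum_sum_type, add_comm]
  congr 1
  exact (sum_ite_eq' univ i 1).trans (if_pos (mem_univ i))

end FiberForests

lemma ncard_edgeSet_add_card_connectedComponent {V : Type*} [Fintype V] {G : SimpleGraph V}
    (hG : G.IsAcyclic) : G.edgeSet.ncard + Nat.card G.ConnectedComponent = Fintype.card V := by
  classical
  have hout (C : G.ConnectedComponent) : G.connectedComponentMk C.out = C := Quot.out_eq C
  have hinj : Function.Injective fun C : G.ConnectedComponent => C.out :=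
    Function.LeftInverse.injective hout
  have hR : IsRootSet G (univ.map ⟨_, hinj⟩) := by
    constructor
    · simp only [mem_map, mem_univ, true_and, Function.Embedding.coeFn_mk]
      rintro _ ⟨C, rfl⟩ _ ⟨D, rfl⟩ h
      rw [← SimpleGraph.ConnectedComponent.eq, hout, hout] at h
      rw [h]
    · exact fun v => ⟨(G.connectedComponentMk v).out, by simp,
        SimpleGraph.ConnectedComponent.exact (hout _).symm⟩
  simpa using hR.ncard_edgeSet_add_card hG

namespace LabeledNCForest

variable {n k : ℕ} (L : LabeledNCForest n k)

/-- The component of `L` whose label contains `x`. -/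
noncomputable def componentOf (x : Fin k) : L.G.ConnectedComponent :=
  (L.label_partition x).choose

lemma mem_label_iff {x : Fin k} {C : L.G.ConnectedComponent} :
    x ∈ L.label C ↔ L.componentOf x = C :=
  ⟨fun h => ((L.label_partition x).choose_spec.2 C h).symm,
    fun h => h ▸ (L.label_partition x).choose_spec.1⟩

lemma card_connectedComponent : Nat.card L.G.ConnectedComponent = n - k := by
  have := ncard_edgeSet_add_card_connectedComponent L.acyclic
  rw [L.edges, Fintype.card_fin] at this
  omega

lemma nonempty_connectedComponent_equiv {ι : Type*} [Fintype ι]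
    (hcard : k + Fintype.card ι = n) : Nonempty (L.G.ConnectedComponent ≃ ι) := by
  rw [← Finite.card_eq, L.card_connectedComponent, Nat.card_eq_fintype_card]
  omega

variable {ι : Type*}

lemma label_eq_filter [DecidableEq ι] (e : L.G.ConnectedComponent ≃ ι)
    (C : L.G.ConnectedComponent) :
    L.label C = ({x | e (L.componentOf x) = e C} : Finset (Fin k)) := by
  ext x
  simp [L.mem_label_iff]

lemma sigma_mk_eq_sigma_mk {L L' : LabeledNCForest n k} {e : L.G.ConnectedComponent ≃ ι}
    {e' : L'.G.ConnectedComponent ≃ ι} {g : Fin k → ι} (hG : L.G = L'.G)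
    (he : ∀ v, e (L.G.connectedComponentMk v) = e' (L'.G.connectedComponentMk v))
    (hL : ∀ x, e (L.componentOf x) = g x) (hL' : ∀ x, e' (L'.componentOf x) = g x) :
    (⟨L, e⟩ : Σ L : LabeledNCForest n k, L.G.ConnectedComponent ≃ ι) = ⟨L', e'⟩ := by
  classical
  have hlabel := L.label_eq_filter e
  have hlabel' := L'.label_eq_filter e'
  simp only [hL, hL'] at hlabel hlabel'
  clear hL hL'
  obtain ⟨G, _, _, _, label, _, _⟩ := L
  obtain ⟨G', _, _, _, label', _, _⟩ := L'
  obtain rfl : G = G' := hG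
  obtain rfl : e = e' := Equiv.ext (SimpleGraph.ConnectedComponent.ind he)
  obtain rfl : label = label' := funext fun C => (hlabel C).trans (hlabel' C).symm
  rfl

variable [DecidableEq ι]

/-- The data of a labeled noncrossing forest `G` with components indexed by `ι`: the component with
index `i` consists of the vertices `v` with `f v = i` and is labeled by the `x` with `g x = i`. -/
structure IsEncoding (g : Fin k → ι) (f : Fin n → ι) (G : SimpleGraph (Fin n)) : Prop where
  isNoncrossing : IsNoncrossing f
  card_fiber : ∀ i, #{v | f v = i} = #{x | g x = i} + 1
  isFiberForest : IsFiberForest f G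

lemma isEncoding (e : L.G.ConnectedComponent ≃ ι) :
    IsEncoding (fun x => e (L.componentOf x)) (fun v => e (L.G.connectedComponentMk v)) L.G where
  isNoncrossing a b c d hab hbc hcd hac hbd := congrArg e
    (isNoncrossing_connectedComponentMk L.noncross a b c d hab hbc hcd
      (e.injective hac) (e.injective hbd))
  card_fiber i := by
    obtain ⟨C, rfl⟩ := e.surjective i
    rw [← L.label_eq_filter, L.label_card]
    exact (Nat.subtype_card _ (by simp)).symm
  isFiberForest := ⟨L.acyclic, fun u v => by simp⟩

lemma IsEncoding.surjective {g : Fin k → ι} {f : Fin n → ι} {G : SimpleGraph (Fin n)}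
    (h : IsEncoding g f G) : f.Surjective := fun i => by
  obtain ⟨v, hv⟩ := card_pos.1 ((Nat.succ_pos _).trans_eq (h.card_fiber i).symm)
  exact ⟨v, (mem_filter_univ v).1 hv⟩

lemma IsEncoding.exists_eq [Fintype ι] {g : Fin k → ι} {f : Fin n → ι} {G : SimpleGraph (Fin n)}
    (h : IsEncoding g f G) (hcard : k + Fintype.card ι = n) :
    ∃ (L : LabeledNCForest n k) (e : L.G.ConnectedComponent ≃ ι),
      (fun x => e (L.componentOf x)) = g ∧ (fun v => e (L.G.connectedComponentMk v)) = f ∧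
        L.G = G := by
  have hreach := h.isFiberForest.reachable_iff
  obtain ⟨e, he⟩ := h.isFiberForest.exists_connectedComponent_equiv h.surjective
  let L : LabeledNCForest n k :=
    { G := G
      acyclic := h.isFiberForest.isAcyclic
      edges := by
        have := ncard_edgeSet_add_card_connectedComponent h.isFiberForest.isAcyclic
        rw [Nat.card_congr e, Nat.card_eq_fintype_card, Fintype.card_fin] at this
        omega
      noncross := fun a b c d hab hbc hcd hac hbd => (hreach a b).2 <|
        h.isNoncrossing a b c d hab hbc hcd ((hreach a c).1 hac.reachable)
          ((hreach b d).1 hbd.reachable)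
      label := fun C => {x | g x = e C}
      label_card := fun C => by
        rw [← h.card_fiber]
        exact (Nat.subtype_card _ fun v => by
          rw [mem_filter_univ, ← e.injective.eq_iff, he]).symm
      label_partition := fun x =>
        ⟨e.symm (g x), by simp, fun C hC => by simpa [e.eq_symm_apply, eq_comm] using hC⟩ }
  refine ⟨L, e, funext fun x => ?_, funext he, rfl⟩
  have hx : x ∈ L.label (L.componentOf x) := L.mem_label_iff.2 rfl
  exact ((mem_filter_univ x).1 hx).symm

variable [Fintype ι]

variable (n k ι) in
/-- The encodings of the labeled noncrossing forests with components indexed by `ι`. -/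
noncomputable def encodings : Finset (Σ _ : Fin k → ι, Σ _ : Fin n → ι, SimpleGraph (Fin n)) :=
  univ.sigma fun g => (noncrossingMaps n fun i => #{x | g x = i} + 1).sigma fiberForests

lemma mem_encodings {t} : t ∈ encodings n k ι ↔ IsEncoding t.1 t.2.1 t.2.2 := by
  simp only [encodings, mem_sigma, mem_univ, mem_noncrossingMaps, mem_fiberForests, true_and]
  exact ⟨fun ⟨⟨h₁, h₂⟩, h₃⟩ => ⟨h₁, h₂, h₃⟩, fun ⟨h₁, h₂, h₃⟩ => ⟨⟨h₁, h₂⟩, h₃⟩⟩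

lemma natCard_mul_factorial (hcard : k + Fintype.card ι = n) :
    Nat.card (LabeledNCForest n k) * (Fintype.card ι).factorial = #(encodings n k ι) := by
  let e₀ (L : LabeledNCForest n k) : L.G.ConnectedComponent ≃ ι :=
    (L.nonempty_connectedComponent_equiv hcard).some
  let encode (p : Σ L : LabeledNCForest n k, L.G.ConnectedComponent ≃ ι) : encodings n k ι :=
    ⟨⟨fun x => p.2 (p.1.componentOf x), fun v => p.2 (p.1.G.connectedComponentMk v), p.1.G⟩,
      mem_encodings.2 (p.1.isEncoding p.2)⟩
  have hencode : encode.Bijective := by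
    constructor
    · rintro ⟨L, e⟩ ⟨L', e'⟩ h
      simp only [encode, Subtype.mk.injEq, Sigma.mk.injEq, heq_eq_eq] at h
      exact sigma_mk_eq_sigma_mk h.2.2 (congrFun h.2.1) (congrFun h.1) fun x => rfl
    · rintro ⟨⟨g, f, G⟩, ht⟩
      obtain ⟨L, e, rfl, rfl, rfl⟩ := (mem_encodings.1 ht).exists_eq hcard
      exact ⟨⟨L, e⟩, rfl⟩
  calc Nat.card (LabeledNCForest n k) * (Fintype.card ι).factorial
      = Nat.card (Σ L : LabeledNCForest n k, L.G.ConnectedComponent ≃ ι) := by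
        rw [Nat.card_congr (Equiv.sigmaEquivProdOfEquiv fun L => (e₀ L).equivCongr (.refl ι)),
          Nat.card_prod, Nat.card_perm, Nat.card_eq_fintype_card (α := ι)]
    _ = #(encodings n k ι) := by
        rw [Nat.card_eq_of_bijective encode hencode, Nat.card_eq_fintype_card, Fintype.card_coe]

lemma card_encodings : #(encodings n k ι) =
    ∑ g : Fin k → ι, #(noncrossingMaps n fun i => #{x | g x = i} + 1) *
      #(fiberForests (Sum.elim id g)) := by
  rw [encodings, card_sigma]
  refine sum_congr rfl fun g _ => ?_
  rw [card_sigma]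
  refine sum_const_nat fun f hf => card_fiberForests_congr fun i => ?_
  rw [card_filter_sumElim_id, (mem_noncrossingMaps.1 hf).2 i]

lemma succ_mul_card_encodings_mul (hcard : k + Fintype.card ι = n) :
    (n + 1) * (#(encodings n k ι) * n) =
      (n + 1).descFactorial (Fintype.card ι) * (Fintype.card ι * n ^ k) := by
  have hmaps (g : Fin k → ι) : (n + 1) * #(noncrossingMaps n fun i => #{x | g x = i} + 1) =
      (n + 1).descFactorial (Fintype.card ι) := by
    refine succ_mul_card_noncrossingMaps (fun i => Nat.succ_pos _) ?_
    rw [sum_add_distrib, ← card_eq_sum_card_fiberwise fun x _ => mem_univ (g x)]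
    simpa using hcard
  have hroots := card_rootedForests_mul_card (univ.map .inl : Finset (ι ⊕ Fin k))
  rw [card_map, card_univ, Fintype.card_sum, Fintype.card_fin, add_comm, hcard,
    card_rootedForests_eq_sum_card_fiberForests] at hroots
  rw [← mul_assoc, card_encodings, mul_sum]
  simp only [← mul_assoc, hmaps]
  rw [← mul_sum, mul_assoc, hroots, mul_assoc, show n - Fintype.card ι = k by omega]

theorem natCard_mul_eq_choose_mul_pow (hk : k < n) :
    Nat.card (LabeledNCForest n k) * n = n.choose (k + 1) * n ^ k := by
  obtain ⟨j, rfl⟩ : ∃ j, n = k + j + 1 := Nat.exists_eq_add_of_lt hk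
  have hencodings := succ_mul_card_encodings_mul (n := k + j + 1) (k := k) (ι := Fin (j + 1))
    (by simp [add_assoc])
  rw [← natCard_mul_factorial (by simp [add_assoc]), Fintype.card_fin, Nat.succ_descFactorial_succ,
    Nat.descFactorial_eq_factorial_mul_choose,
    ← Nat.choose_symm_of_eq_add (show k + j + 1 = k + 1 + j by omega), Nat.factorial_succ]
    at hencodings
  have hpos : 0 < (k + j + 1 + 1) * ((j + 1) * j.factorial) := by positivity
  refine Nat.eq_of_mul_eq_mul_left hpos ?_
  linear_combination hencodings

end LabeledNCForest

/-- The number of labeled non-crossing forests on `n` circularly arranged vertices with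
exactly `k` edges equals `(n choose (k+1)) * n^(k-1)` for `1 ≤ n` and `0 ≤ k ≤ n-1`. -/
theorem stmt_2 (n k : ℕ) (hn : 1 ≤ n) (hk : k ≤ n - 1) :
    (Nat.card (LabeledNCForest n k) : ℚ) =
      (n.choose (k + 1) : ℚ) * (n : ℚ) ^ ((k : ℤ) - 1) := by
  have hn_ne : (n : ℚ) ≠ 0 := by positivity
  rw [zpow_sub_one₀ hn_ne, zpow_natCast, ← mul_assoc, eq_mul_inv_iff_mul_eq₀ hn_ne]
  exact_mod_cast LabeledNCForest.natCard_mul_eq_choose_mul_pow (show k < n by omega)
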